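/- arXiv:2508.01883 — 5 statements merged into one kernel-verified Lean document; each statement's English description precedes it below -/
import Mathlib

section
/- For every real parameter τ > 0, the extended log-barrier function φ_τ is convex on ℝ. -/
/-- The extended log-barrier function φ_τ. -/
noncomputable def phi (τ : ℝ) (x : ℝ) : ℝ :=
  if x ≤ -1 / τ ^ 2 then -(1 / τ) * Real.log (-x)
  else τ * x - (1 / τ) * Real.log (1 / τ ^ 2) + 1 / τ

lemma phi_form (τ : ℝ) (hτ : 0 < τ) (z : ℝ) : ∃ u : ℝ, 1 / τ ^ 2 ≤ u ∧ 0 ≤ z + u ∧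
    (z + u = 0 ∨ u = 1 / τ ^ 2) ∧ phi τ z = -(1 / τ) * Real.log u + τ * (z + u) := by
  unfold phi
  have e : -1 / τ ^ 2 = -(1 / τ ^ 2) := by ring
  rw [e]
  split_ifs with h
  · exact ⟨-z, by linarith, by linarith, Or.inl (by ring), by ring⟩
  · refine ⟨1 / τ ^ 2, le_refl _, by linarith, Or.inr rfl, ?_⟩
    have : τ * (1 / τ ^ 2) = 1 / τ := by field_simp
    linear_combination -this

lemma phi_subgrad (τ : ℝ) (hτ : 0 < τ) (z : ℝ) :
    ∃ g : ℝ, ∀ y, phi τ z + g * (y - z) ≤ phi τ y := by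
  obtain ⟨u, hu, hz, hor, hp⟩ := phi_form τ hτ z
  have h0 : 0 < 1 / τ ^ 2 := by positivity
  have hu0 : 0 < u := lt_of_lt_of_le h0 hu
  refine ⟨1 / (τ * u), fun y => ?_⟩
  obtain ⟨v, hv, hy, -, hq⟩ := phi_form τ hτ y
  have hv0 : 0 < v := lt_of_lt_of_le h0 hv
  rw [hp, hq]
  have hl := Real.log_le_sub_one_of_pos (div_pos hv0 hu0)
  rw [Real.log_div hv0.ne' hu0.ne'] at hl
  have h1 := mul_le_mul_of_nonneg_left hl (by positivity : 0 ≤ 1 / τ)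
  have h2 : 1 / τ * (v / u - 1) = 1 / (τ * u) * (v - u) := by field_simp
  rw [h2] at h1
  have h3 : 0 ≤ (τ - 1 / (τ * u)) * ((y + v) - (z + u)) := by
    rcases hor with h | h
    · rw [h, sub_zero]
      refine mul_nonneg ?_ hy
      rw [sub_nonneg, div_le_iff₀ (by positivity)]
      rw [div_le_iff₀ (by positivity)] at hu
      nlinarith
    · have : τ - 1 / (τ * u) = 0 := by rw [h]; field_simp; ring
      rw [this, zero_mul]
  nlinarith

/-- For every τ > 0, the extended log-barrier function φ_τ is convex on ℝ. -/
theorem phi_convexOn (τ : ℝ) (hτ : 0 < τ) :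
    ConvexOn ℝ Set.univ (phi τ) := by
  refine ⟨convex_univ, fun x _ y _ a b ha hb hab => ?_⟩
  simp only [smul_eq_mul]
  obtain ⟨g, hg⟩ := phi_subgrad τ hτ (a * x + b * y)
  have hx := mul_le_mul_of_nonneg_left (hg x) ha
  have hy := mul_le_mul_of_nonneg_left (hg y) hb
  have hb' : b = 1 - a := by linarith
  subst hb'
  linarith
end

section
/- Core inequality of the duality-gap theorem: for every real parameter τ > 0 and every g ∈ ℝ, the implicit dual variable λ_τ(g) is strictly positive, and -λ_τ(g)·g ≤ 1/τ. (Explicitly: if g ≤ -1/τ² then -λ_τ(g)·g = 1/τ; if -1/τ² < g ≤ 0 then -τ·g ≤ 1/τ; and if g > 0 then -τ·g ≤ 0 ≤ 1/τ.) -/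
/-- The implicit dual variable function λ_τ. -/
noncomputable def lam (τ : ℝ) (g : ℝ) : ℝ :=
  if g ≤ -1 / τ ^ 2 then -1 / (τ * g) else τ

/-- Core inequality of the duality-gap theorem: for every τ > 0 and every
g ∈ ℝ, the implicit dual variable λ_τ(g) is strictly positive and
-λ_τ(g)·g ≤ 1/τ; explicitly, if g ≤ -1/τ² then -λ_τ(g)·g = 1/τ, if
-1/τ² < g ≤ 0 then -τ·g ≤ 1/τ, and if g > 0 then -τ·g ≤ 0 ≤ 1/τ. -/
theorem lam_pos_and_gap (τ : ℝ) (hτ : 0 < τ) (g : ℝ) :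
    0 < lam τ g ∧ -(lam τ g * g) ≤ 1 / τ ∧
    (g ≤ -1 / τ ^ 2 → -(lam τ g * g) = 1 / τ) ∧
    (-1 / τ ^ 2 < g → g ≤ 0 → -(τ * g) ≤ 1 / τ) ∧
    (0 < g → -(τ * g) ≤ 0 ∧ (0 : ℝ) ≤ 1 / τ) := by
  have key : -1 / τ ^ 2 < g → -(τ * g) ≤ 1 / τ := by
    intro h
    rw [div_lt_iff₀ (by positivity)] at h
    rw [le_div_iff₀ hτ]
    nlinarith
  have hneg : g ≤ -1 / τ ^ 2 → g < 0 := fun h =>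
    lt_of_le_of_lt h (div_neg_of_neg_of_pos (by norm_num) (by positivity))
  have heq : g ≤ -1 / τ ^ 2 → -(lam τ g * g) = 1 / τ := by
    intro h
    have hg := (hneg h).ne
    have ht := hτ.ne'
    rw [lam, if_pos h]
    field_simp
  refine ⟨?_, ?_, heq, fun h _ => key h, fun h => ⟨?_, by positivity⟩⟩
  · unfold lam
    split_ifs with h
    · exact div_pos_of_neg_of_neg (by norm_num) (mul_neg_of_pos_of_neg hτ (hneg h))
    · exact hτ
  · by_cases h : g ≤ -1 / τ ^ 2
    · exact (heq h).le
    · rw [lam, if_neg h]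
      exact key (not_le.mp h)
  · have := mul_pos hτ h
    linarith
end

section
/- Duality gap bound (Theorem 2, quantitative core): let τ > 0, η ≥ 0, m ∈ ℕ, and let g : Fin m → ℝ be constraint values, I : Fin m → ℝ intrinsic-reward values, and Imax : Fin m → ℝ with 0 ≤ I i ≤ Imax i for every i. Setting λ i = λ_τ(g i) for each i, the duality gap satisfies -∑_{i} λ i · g i + η·∑_{i} I i ≤ m/τ + η·∑_{i} Imax i. -/
open Finset

/-- Duality gap bound (Theorem 2, quantitative core): with λ i = λ_τ(g i),
0 ≤ I i ≤ Imax i, the duality gap satisfies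
-∑ λ i · g i + η·∑ I i ≤ m/τ + η·∑ Imax i. -/
theorem duality_gap_bound (τ η : ℝ) (hτ : 0 < τ) (hη : 0 ≤ η) (m : ℕ)
    (g I Imax : Fin m → ℝ) (hI0 : ∀ i, 0 ≤ I i) (hImax : ∀ i, I i ≤ Imax i) :
    -(∑ i, lam τ (g i) * g i) + η * ∑ i, I i ≤ (m : ℝ) / τ + η * ∑ i, Imax i := by
  have key : ∀ x : ℝ, -(lam τ x * x) ≤ 1 / τ := by
    intro x
    unfold lam
    split_ifs with h
    · have hx : x < 0 := lt_of_le_of_lt h (div_neg_of_neg_of_pos (by norm_num) (by positivity))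
      have hx' : x ≠ 0 := hx.ne
      apply le_of_eq
      field_simp
    · push Not at h
      have h2 : τ * (-1 / τ ^ 2) < τ * x := mul_lt_mul_of_pos_left h hτ
      have h3 : τ * (-1 / τ ^ 2) = -(1 / τ) := by field_simp
      linarith
  have h1 : -(∑ i, lam τ (g i) * g i) ≤ (m : ℝ) / τ := by
    rw [← Finset.sum_neg_distrib]
    calc _ ≤ ∑ _i : Fin m, 1 / τ := Finset.sum_le_sum fun i _ => key (g i)
      _ = (m : ℝ) / τ := by simp [div_eq_mul_inv]
  exact add_le_add h1
    (mul_le_mul_of_nonneg_left (Finset.sum_le_sum fun i _ => hImax i) hη)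
end

section
/- PCPO update performance lower bound, strictly feasible case (Theorem 3, case 1, quantitative form): let τ > 0, η ≥ 0, m ∈ ℕ, and f₀, f₁, L ∈ ℝ with f₁ - f₀ ≥ L. Let a, b : Fin m → ℝ with a i ≤ -1/τ² and b i ≤ -1/τ² for every i, let D, M : Fin m → ℝ with D i ≥ 0, M i > 0, b i - a i ≤ D i, and -(b i) ≥ M i for every i, and let I₀, I₁, Imax : Fin m → ℝ with I₁ i - I₀ i ≥ -(Imax i) for every i. Then (f₁ - ∑_i φ_τ(b i) + η·∑_i I₁ i) - (f₀ - ∑_i φ_τ(a i) + η·∑_i I₀ i) ≥ L - (1/τ)·∑_i log(1 + D i/M i) - η·∑_i Imax i. -/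
open Finset

/-- PCPO update performance lower bound, strictly feasible case (Theorem 3,
case 1, quantitative form). -/
theorem pcpo_update_lower_bound_feasible (τ η : ℝ) (hτ : 0 < τ) (hη : 0 ≤ η)
    (m : ℕ) (f₀ f₁ L : ℝ) (hf : f₁ - f₀ ≥ L)
    (a b D M : Fin m → ℝ)
    (ha : ∀ i, a i ≤ -1 / τ ^ 2) (hb : ∀ i, b i ≤ -1 / τ ^ 2)
    (hD : ∀ i, 0 ≤ D i) (hM : ∀ i, 0 < M i)
    (hba : ∀ i, b i - a i ≤ D i) (hbM : ∀ i, M i ≤ -(b i))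
    (I₀ I₁ Imax : Fin m → ℝ) (hI : ∀ i, I₁ i - I₀ i ≥ -(Imax i)) :
    (f₁ - ∑ i, phi τ (b i) + η * ∑ i, I₁ i)
      - (f₀ - ∑ i, phi τ (a i) + η * ∑ i, I₀ i) ≥
    L - (1 / τ) * ∑ i, Real.log (1 + D i / M i) - η * ∑ i, Imax i := by
  have key : ∀ i, phi τ (b i) - phi τ (a i) ≤ (1 / τ) * Real.log (1 + D i / M i) := by
    intro i
    have h1 := hM i
    have h2 := hbM i
    have hq : 0 ≤ D i / M i := div_nonneg (hD i) h1.le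
    have hbp : 0 < -(b i) := lt_of_lt_of_le h1 h2
    have hap : 0 < -(a i) := by
      have h3 : -1 / τ ^ 2 < 0 := div_neg_of_neg_of_pos (by norm_num) (by positivity)
      have h4 := ha i
      linarith
    have hDM : D i = M i * (D i / M i) := by field_simp
    have hle : -(a i) ≤ -(b i) * (1 + D i / M i) := by
      have h5 := mul_le_mul_of_nonneg_right h2 hq
      have h6 := hba i
      linarith
    have hlog := Real.log_le_log hap hle
    rw [Real.log_mul hbp.ne' (by positivity)] at hlog
    have ht : 0 ≤ 1 / τ := by positivity
    have h7 := mul_le_mul_of_nonneg_left hlog ht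
    simp only [phi, if_pos (ha i), if_pos (hb i)]
    linarith
  have hs : ∑ i, phi τ (b i) - ∑ i, phi τ (a i)
      ≤ (1 / τ) * ∑ i, Real.log (1 + D i / M i) := by
    rw [← Finset.sum_sub_distrib, Finset.mul_sum]
    exact Finset.sum_le_sum fun i _ => key i
  have hi : -∑ i, Imax i ≤ ∑ i, I₁ i - ∑ i, I₀ i := by
    rw [← Finset.sum_sub_distrib, ← Finset.sum_neg_distrib]
    exact Finset.sum_le_sum fun i _ => hI i
  have hi2 := mul_le_mul_of_nonneg_left hi hη
  linarith
end

section
/- PCPO update performance lower bound, near-boundary case (Theorem 3, case 2, quantitative form): let τ > 0, η ≥ 0, m ∈ ℕ, and f₀, f₁, L ∈ ℝ with f₁ - f₀ ≥ L. Let a, b : Fin m → ℝ with a i ≥ -1/τ² and b i ≥ -1/τ² for every i, let D : Fin m → ℝ with b i - a i ≤ D i for every i, and let I₀, I₁, Imax : Fin m → ℝ with I₁ i - I₀ i ≥ -(Imax i) for every i. Then (f₁ - ∑_i φ_τ(b i) + η·∑_i I₁ i) - (f₀ - ∑_i φ_τ(a i) + η·∑_i I₀ i) ≥ L - τ·∑_i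 D i - η·∑_i Imax i. -/
open Finset

theorem phi_affine (τ : ℝ) (hτ : 0 < τ) (x : ℝ) (hx : x ≥ -1 / τ ^ 2) :
    phi τ x = τ * x - (1 / τ) * Real.log (1 / τ ^ 2) + 1 / τ := by
  unfold phi
  split_ifs with h
  · have e : x = -1 / τ ^ 2 := le_antisymm h hx
    have e2 : -x = 1 / τ ^ 2 := by rw [e]; ring
    rw [e2, e]
    have : τ * (-1 / τ ^ 2) = -(1 / τ) := by field_simp
    rw [this]; ring
  · rfl

/-- PCPO update performance lower bound, near-boundary case (Theorem 3,
case 2, quantitative form). -/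
theorem pcpo_update_lower_bound_boundary (τ η : ℝ) (hτ : 0 < τ) (hη : 0 ≤ η)
    (m : ℕ) (f₀ f₁ L : ℝ) (hf : f₁ - f₀ ≥ L)
    (a b D : Fin m → ℝ)
    (ha : ∀ i, a i ≥ -1 / τ ^ 2) (hb : ∀ i, b i ≥ -1 / τ ^ 2)
    (hba : ∀ i, b i - a i ≤ D i)
    (I₀ I₁ Imax : Fin m → ℝ) (hI : ∀ i, I₁ i - I₀ i ≥ -(Imax i)) :
    (f₁ - ∑ i, phi τ (b i) + η * ∑ i, I₁ i)
      - (f₀ - ∑ i, phi τ (a i) + η * ∑ i, I₀ i) ≥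
    L - τ * ∑ i, D i - η * ∑ i, Imax i := by
  have h1 : ∑ i, phi τ (b i) - ∑ i, phi τ (a i) ≤ τ * ∑ i, D i := by
    rw [← Finset.sum_sub_distrib, Finset.mul_sum]
    refine Finset.sum_le_sum fun i _ => ?_
    rw [phi_affine τ hτ _ (ha i), phi_affine τ hτ _ (hb i)]
    have := mul_le_mul_of_nonneg_left (hba i) hτ.le
    linarith
  have h2 : -∑ i, Imax i ≤ ∑ i, I₁ i - ∑ i, I₀ i := by
    rw [← Finset.sum_sub_distrib, ← Finset.sum_neg_distrib]
    exact Finset.sum_le_sum fun i _ => hI i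
  have h3 := mul_le_mul_of_nonneg_left h2 hη
  linarith
end
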